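/- arXiv:1007.3467 — 3 statements merged into one kernel-verified Lean document; each statement's English description precedes it below -/
import Mathlib

section
/- Let n ≥ 2, let 1 ≤ s ≤ n−1, and let C_s be the cyclic shift by s on {1,…,n}. Then C_s is fixed-point-free, Strang canonical, row-settled, and column-settled; the bandwidth of C_s equals max{s, n − s}; and iterating the reduction map starting from C_s reaches the identity in exactly n − 1 steps. -/
/-- The bandwidth of a permutation `σ` of `{0,…,n-1}`: `max_i |σ(i) - i|`. -/
def bandwidth {n : ℕ} (σ : Equiv.Perm (Fin n)) : ℕ :=
  Finset.univ.sup fun i : Fin n => ((σ i : ℤ) - (i : ℤ)).natAbs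

/-- `c` is a cut point of `σ` if `σ` maps the initial segment `{0,…,c}` onto itself. -/
def IsCutPoint {n : ℕ} (σ : Equiv.Perm (Fin n)) (c : Fin n) : Prop :=
  ∀ j : Fin n, j ≤ c → σ j ≤ c

/-- Indices `i ≤ j` lie in the same section of `σ` if there is no cut point `c`
with `i ≤ c < j`. -/
def SameSection {n : ℕ} (σ : Equiv.Perm (Fin n)) (i j : Fin n) : Prop :=
  i ≤ j ∧ ∀ c : Fin n, i ≤ c → c < j → ¬ IsCutPoint σ c

/-- Unordered version of `SameSection`. -/
def InSameSection {n : ℕ} (σ : Equiv.Perm (Fin n)) (i j : Fin n) : Prop :=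
  SameSection σ i j ∨ SameSection σ j i

/-- `σ` is upper-canonical: for `i < j` with `σ(i) > i` and `σ(j) > j`, `σ(i) < σ(j)`. -/
def UpperCanonical {n : ℕ} (σ : Equiv.Perm (Fin n)) : Prop :=
  ∀ i j : Fin n, i < j → i < σ i → j < σ j → σ i < σ j

/-- `σ` is lower-canonical: for `i < j` with `σ(i) < i` and `σ(j) < j`, `σ(i) < σ(j)`. -/
def LowerCanonical {n : ℕ} (σ : Equiv.Perm (Fin n)) : Prop :=
  ∀ i j : Fin n, i < j → σ i < i → σ j < j → σ i < σ j

/-- `σ` is Strang canonical if it is both upper- and lower-canonical. -/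
def StrangCanonical {n : ℕ} (σ : Equiv.Perm (Fin n)) : Prop :=
  UpperCanonical σ ∧ LowerCanonical σ

/-- `σ` is row-settled: no indices `i < j` in the same section
with `σ(i) < i` (negative row) and `σ(j) > j` (positive row). -/
def RowSettled {n : ℕ} (σ : Equiv.Perm (Fin n)) : Prop :=
  ∀ i j : Fin n, i < j → SameSection σ i j → ¬ (σ i < i ∧ j < σ j)

/-- `σ` is settled if it is row-settled or column-settled
(column-settled means `σ⁻¹` is row-settled). -/
def Settled {n : ℕ} (σ : Equiv.Perm (Fin n)) : Prop :=
  RowSettled σ ∨ RowSettled σ⁻¹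

/-- The reducing permutation of `σ`: the product of the (pairwise disjoint)
transpositions `(i, i+1)` over all `i` with `σ(i) > i` and `σ(i+1) < i+1`. -/
def reducingPerm {n : ℕ} (σ : Equiv.Perm (Fin n)) : Equiv.Perm (Fin n) :=
  ((List.finRange n).filterMap fun i : Fin n =>
    if h : (i : ℕ) + 1 < n then
      let j : Fin n := ⟨(i : ℕ) + 1, h⟩
      if i < σ i ∧ σ j < j then some (Equiv.swap i j) else none
    else none).prod

/-- The reduction of `σ` is `σ` composed with its reducing permutation. -/
def reduction {n : ℕ} (σ : Equiv.Perm (Fin n)) : Equiv.Perm (Fin n) :=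
  σ * reducingPerm σ

/-- A bubblesort step for `σ`: a nonidentity permutation `t` that is a product of
pairwise disjoint adjacent transpositions `(i, i+1)`, each satisfying `σ(i) > σ(i+1)`. -/
def IsBubbleStep {n : ℕ} (σ t : Equiv.Perm (Fin n)) : Prop :=
  t ≠ 1 ∧ ∃ l : List (Fin n),
    l.Pairwise (fun i j => (i : ℕ) + 2 ≤ (j : ℕ)) ∧
    (∀ i ∈ l, ∃ h : (i : ℕ) + 1 < n, σ ⟨(i : ℕ) + 1, h⟩ < σ i) ∧
    t = (l.map fun i : Fin n =>
      (if h : (i : ℕ) + 1 < n then Equiv.swap i ⟨(i : ℕ) + 1, h⟩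
       else 1 : Equiv.Perm (Fin n))).prod

/-- The number of inversions of `σ`: pairs `i < j` with `σ(i) > σ(j)`. -/
def inversions {n : ℕ} (σ : Equiv.Perm (Fin n)) : ℕ :=
  (Finset.univ.filter fun p : Fin n × Fin n => p.1 < p.2 ∧ σ p.2 < σ p.1).card

/-- The cyclic shift by `s` on `{0,…,n-1}`: `i ↦ (i + s) mod n`. -/
def cyclicShift (n s : ℕ) : Equiv.Perm (Fin n) := (finRotate n) ^ s


/-- The index `i` is an active swap position of `σ`. -/
def ActiveAt {n : ℕ} (σ : Equiv.Perm (Fin n)) (i : Fin n) : Prop :=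
  ∃ h : (i : ℕ) + 1 < n, i < σ i ∧ σ ⟨(i : ℕ) + 1, h⟩ < ⟨(i : ℕ) + 1, h⟩

/-- The partial product of the reducing permutation over a list of indices. -/
def partRed {n : ℕ} (σ : Equiv.Perm (Fin n)) (l : List (Fin n)) : Equiv.Perm (Fin n) :=
  (l.filterMap fun i : Fin n =>
    if h : (i : ℕ) + 1 < n then
      let j : Fin n := ⟨(i : ℕ) + 1, h⟩
      if i < σ i ∧ σ j < j then some (Equiv.swap i j) else none
    else none).prod

theorem partRed_cons_inactive {n : ℕ} (σ : Equiv.Perm (Fin n)) (i : Fin n) (l : List (Fin n))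
    (hi : ¬ ActiveAt σ i) : partRed σ (i :: l) = partRed σ l := by
  unfold partRed
  rw [List.filterMap_cons_none]
  by_cases h : (i : ℕ) + 1 < n
  · have : ¬ (i < σ i ∧ σ ⟨(i : ℕ) + 1, h⟩ < ⟨(i : ℕ) + 1, h⟩) := fun h' => hi ⟨h, h'⟩
    simp only [dif_pos h, if_neg this]
  · simp only [dif_neg h]

theorem partRed_cons_active {n : ℕ} (σ : Equiv.Perm (Fin n)) (i : Fin n) (l : List (Fin n))
    (hi : ActiveAt σ i) :
    partRed σ (i :: l) = Equiv.swap i ⟨(i : ℕ) + 1, hi.1⟩ * partRed σ l := by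
  obtain ⟨h, h'⟩ := hi
  unfold partRed
  rw [List.filterMap_cons_some (b := Equiv.swap i ⟨(i : ℕ) + 1, h⟩)]
  · rw [List.prod_cons]
  · simp only [dif_pos h, if_pos h']

theorem partRed_fix {n : ℕ} (σ : Equiv.Perm (Fin n)) (x : Fin n) (l : List (Fin n))
    (hx : ∀ i ∈ l, ActiveAt σ i → i ≠ x ∧ (i : ℕ) + 1 ≠ x) : partRed σ l x = x := by
  induction l with
  | nil => simp [partRed]
  | cons i l ih =>
    have ih' := ih fun j hj => hx j (List.mem_cons_of_mem _ hj)
    by_cases hi : ActiveAt σ i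
    · rw [partRed_cons_active σ i l hi, Equiv.Perm.mul_apply, ih']
      have := hx i List.mem_cons_self hi
      exact Equiv.swap_apply_of_ne_of_ne (Ne.symm this.1)
        (fun h => this.2 (by rw [h]))
    · rw [partRed_cons_inactive σ i l hi, ih']

theorem partRed_swap {n : ℕ} (σ : Equiv.Perm (Fin n)) (x y : Fin n) (hy : (y : ℕ) = x + 1)
    (hx1 : x < σ x) (hx2 : σ y < y) (l : List (Fin n)) (hl : l.Nodup) (hxl : x ∈ l) :
    partRed σ l x = y ∧ partRed σ l y = x := by
  have key : ∀ j : Fin n, ActiveAt σ j → (j : ℕ) + 1 ≠ x ∧ j ≠ y := by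
    rintro j ⟨h, h1, h2⟩
    constructor
    · intro he
      have : (⟨(j : ℕ) + 1, h⟩ : Fin n) = x := Fin.ext he
      rw [this] at h2
      exact absurd hx1 (not_lt.mpr h2.le)
    · rintro rfl
      exact absurd hx2 (not_lt.mpr h1.le)
  have hye : ∀ h : (x : ℕ) + 1 < n, (⟨(x : ℕ) + 1, h⟩ : Fin n) = y := fun h => Fin.ext hy.symm
  have hn : (x : ℕ) + 1 < n := hy ▸ y.2
  have hax : ActiveAt σ x := ⟨hn, hx1, by rw [hye]; exact hx2⟩
  induction l with
  | nil => simp at hxl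
  | cons i l ih =>
    rw [List.nodup_cons] at hl
    by_cases hix : i = x
    · subst hix
      rw [partRed_cons_active σ i l hax, Equiv.Perm.mul_apply, Equiv.Perm.mul_apply, hye]
      have f1 : partRed σ l i = i := partRed_fix σ i l fun j hj ha =>
        ⟨fun h => hl.1 (h ▸ hj), (key j ha).1⟩
      have f2 : partRed σ l y = y := partRed_fix σ y l fun j hj ha =>
        ⟨(key j ha).2, fun h => hl.1 (by
          have : j = i := Fin.ext (by omega)
          exact this ▸ hj)⟩
      rw [f1, f2]
      simp
    · have hxl' : x ∈ l := by
        rcases List.mem_cons.mp hxl with h | h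
        · exact absurd h.symm hix
        · exact h
      obtain ⟨e1, e2⟩ := ih hl.2 hxl'
      by_cases hi : ActiveAt σ i
      · rw [partRed_cons_active σ i l hi, Equiv.Perm.mul_apply, Equiv.Perm.mul_apply, e1, e2]
        have k := key i hi
        have hv : (i : ℕ) ≠ x := fun h => hix (Fin.ext h)
        constructor
        · refine Equiv.swap_apply_of_ne_of_ne (Ne.symm k.2) fun h => ?_
          have := congrArg Fin.val h
          simp only at this
          omega
        · refine Equiv.swap_apply_of_ne_of_ne (Ne.symm hix) fun h => ?_
          exact k.1 (congrArg Fin.val h).symm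
      · rw [partRed_cons_inactive σ i l hi]
        exact ⟨e1, e2⟩

theorem reducingPerm_swap {n : ℕ} (σ : Equiv.Perm (Fin n)) (x y : Fin n) (hy : (y : ℕ) = x + 1)
    (hx1 : x < σ x) (hx2 : σ y < y) : reducingPerm σ x = y ∧ reducingPerm σ y = x :=
  partRed_swap σ x y hy hx1 hx2 (List.finRange n) (List.nodup_finRange n) (List.mem_finRange x)

theorem reducingPerm_fix {n : ℕ} (σ : Equiv.Perm (Fin n)) (x : Fin n)
    (h : ∀ i j : Fin n, (j : ℕ) = i + 1 → i < σ i → σ j < j → i ≠ x ∧ j ≠ x) :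
    reducingPerm σ x = x := by
  refine partRed_fix σ x _ fun i _ ⟨h0, h1, h2⟩ => ?_
  have := h i ⟨(i : ℕ) + 1, h0⟩ rfl h1 h2
  exact ⟨this.1, fun he => this.2 (Fin.ext he)⟩

/-- Position at time `t` of the value `v` when reducing the cyclic shift by `s`. -/
def posAt (n s t v : ℕ) : ℕ :=
  if s ≤ v then (v - s) + min (t - (n - 1 - v)) s else (n - s) + v - min (t - v) (n - s)

theorem cyclicShift_val (n s : ℕ) (i : Fin n) : (cyclicShift n s i : ℕ) = (i + s) % n := by
  obtain ⟨m, rfl⟩ : ∃ m, n = m + 1 := ⟨n - 1, by have := i.2; omega⟩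
  induction s with
  | zero => simp [cyclicShift, Nat.mod_eq_of_lt i.2]
  | succ s ih =>
    unfold cyclicShift at ih ⊢
    rw [pow_succ', Equiv.Perm.mul_apply, finRotate_succ_apply, Fin.val_add, ih]
    simp [← add_assoc]

theorem cyclicShift_cases (n s : ℕ) (hs : s < n) (i : Fin n) :
    ((i : ℕ) + s < n ∧ (cyclicShift n s i : ℕ) = i + s) ∨
    (n ≤ (i : ℕ) + s ∧ (cyclicShift n s i : ℕ) + n = i + s) := by
  have hi := i.2
  rw [cyclicShift_val]
  by_cases h : (i : ℕ) + s < n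
  · left; exact ⟨h, Nat.mod_eq_of_lt h⟩
  · right
    refine ⟨by omega, ?_⟩
    rw [Nat.mod_eq_sub_mod (by omega), Nat.mod_eq_of_lt (by omega)]
    omega

theorem iter_pos (n s : ℕ) (hs1 : 1 ≤ s) (hs : s < n) (t : ℕ) :
    ∀ x v : Fin n, (x : ℕ) = posAt n s t v → (reduction^[t] (cyclicShift n s)) x = v := by
  induction t with
  | zero =>
    intro x v h
    have := cyclicShift_cases n s hs x
    have hv := v.2
    apply Fin.ext
    simp only [Function.iterate_zero, id]
    unfold posAt at h
    split_ifs at h <;> omega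
  | succ t ih =>
    intro x v hx
    rw [Function.iterate_succ_apply']
    generalize reduction^[t] (cyclicShift n s) = σ at ih
    have hlt : ∀ v : Fin n, posAt n s t v < n := by
      intro v
      have := v.2
      unfold posAt
      split_ifs <;> omega
    have inv : ∀ y : Fin n, (y : ℕ) = posAt n s t (σ y) := by
      intro y
      have h1 := ih ⟨posAt n s t (σ y), hlt _⟩ (σ y) rfl
      have h2 := σ.injective h1
      exact (congrArg Fin.val h2).symm
    have hv := v.2
    have hxn := x.2
    unfold reduction
    rw [Equiv.Perm.mul_apply]
    by_cases hst : posAt n s (t + 1) v = posAt n s t v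
    · -- stationary value
      have hσ : σ x = v := ih x v (by rw [hx, hst])
      rw [reducingPerm_fix, hσ]
      intro i j hij h1 h2
      rw [Fin.lt_def] at h1 h2
      have i1 := inv i
      have i2 := inv j
      have hi := (σ i).2
      have hj := (σ j).2
      constructor
      · rintro rfl
        rw [hσ] at h1 hi i1
        unfold posAt at *
        split_ifs at * <;> omega
      · rintro rfl
        rw [hσ] at h2 hj i2
        unfold posAt at *
        split_ifs at * <;> omega
    · have hy := ih ⟨posAt n s t v, hlt v⟩ v rfl
      by_cases hsv : s ≤ (v : ℕ)
      · have hm : (v : ℕ) + t + 1 - n < n := by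
          unfold posAt at hst
          rw [if_pos hsv, if_pos hsv] at hst
          omega
        have hw := ih x ⟨(v : ℕ) + t + 1 - n, hm⟩ (by
          rw [hx]
          unfold posAt at *
          simp only
          split_ifs at * <;> omega)
        rw [(reducingPerm_swap σ ⟨posAt n s t v, hlt v⟩ x ?_ ?_ ?_).2, hy]
        · rw [hx]; unfold posAt at *; simp only; split_ifs at * <;> omega
        · rw [hy, Fin.lt_def]; unfold posAt at *; simp only; split_ifs at * <;> omega
        · rw [hw, Fin.lt_def, hx]; unfold posAt at *; simp only; split_ifs at * <;> omega
      · have hm : n - 1 + (v : ℕ) - t < n := by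
          unfold posAt at hst
          rw [if_neg hsv, if_neg hsv] at hst
          omega
        have hw := ih x ⟨n - 1 + (v : ℕ) - t, hm⟩ (by
          rw [hx]
          unfold posAt at *
          simp only
          split_ifs at * <;> omega)
        rw [(reducingPerm_swap σ x ⟨posAt n s t v, hlt v⟩ ?_ ?_ ?_).1, hy]
        · rw [hx]; unfold posAt at *; simp only; split_ifs at * <;> omega
        · rw [hw, Fin.lt_def, hx]; unfold posAt at *; simp only; split_ifs at * <;> omega
        · rw [hy, Fin.lt_def]; unfold posAt at *; simp only; split_ifs at * <;> omega

/-- The cyclic shift `C_s` on `{1,…,n}` is fixed-point-free, Strang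
canonical, row-settled and column-settled; its bandwidth is `max s (n - s)`; and iterating
the reduction map reaches the identity in exactly `n - 1` steps. -/
theorem stmt_10 (n : ℕ) (hn : 2 ≤ n) (s : ℕ) (hs1 : 1 ≤ s) (hs2 : s ≤ n - 1) :
    (∀ i : Fin n, cyclicShift n s i ≠ i) ∧
    StrangCanonical (cyclicShift n s) ∧
    RowSettled (cyclicShift n s) ∧
    RowSettled (cyclicShift n s)⁻¹ ∧
    bandwidth (cyclicShift n s) = max s (n - s) ∧
    reduction^[n - 1] (cyclicShift n s) = 1 ∧
    (∀ k < n - 1, reduction^[k] (cyclicShift n s) ≠ 1) := by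
  have hs : s < n := by omega
  have C := cyclicShift_cases n s hs
  have D : ∀ i : Fin n, cyclicShift n s ((cyclicShift n s)⁻¹ i) = i := fun i => by simp
  refine ⟨?_, ⟨?_, ?_⟩, ?_, ?_, ?_, ?_, ?_⟩
  · intro i h
    have := C i
    rw [h] at this
    omega
  · intro i j hij h1 h2
    rw [Fin.lt_def] at *
    have := C i
    have := C j
    omega
  · intro i j hij h1 h2
    rw [Fin.lt_def] at *
    have := C i
    have := C j
    omega
  · rintro i j hij - ⟨h1, h2⟩
    rw [Fin.lt_def] at *
    have := C i
    have := C j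
    omega
  · rintro i j hij - ⟨h1, h2⟩
    rw [Fin.lt_def] at *
    have a := C ((cyclicShift n s)⁻¹ i)
    have b := C ((cyclicShift n s)⁻¹ j)
    rw [D] at a b
    omega
  · unfold bandwidth
    apply le_antisymm
    · refine Finset.sup_le fun i _ => ?_
      have := C i
      omega
    · apply max_le
      · refine le_trans ?_ (Finset.le_sup (Finset.mem_univ (⟨0, by omega⟩ : Fin n)))
        have := C ⟨0, by omega⟩
        simp only at *
        omega
      · refine le_trans ?_ (Finset.le_sup (Finset.mem_univ (⟨n - 1, by omega⟩ : Fin n)))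
        have := C ⟨n - 1, by omega⟩
        simp only at *
        omega
  · ext v
    rw [iter_pos n s hs1 hs (n - 1) v v ?_]
    · simp
    · have := v.2
      unfold posAt
      split_ifs <;> omega
  · intro k hk h
    have hp : posAt n s k s < n := by
      unfold posAt
      rw [if_pos le_rfl]
      omega
    have := iter_pos n s hs1 hs k ⟨posAt n s k s, hp⟩ ⟨s, hs⟩ rfl
    rw [h] at this
    have := congrArg Fin.val this
    simp only [Equiv.Perm.coe_one, id] at this
    unfold posAt at this
    rw [if_pos le_rfl] at this
    omega
end

section
/- Let σ and τ be Strang canonical permutations of {1,…,n} such that for every index i, σ(i) − i and τ(i) − i have the same sign (both positive, both negative, or both zero), and for every index j, σ⁻¹(j) − j and τ⁻¹(j) − j have the same sign. Then σ = τ. (A Strang canonical permutation matrix is uniquely determined by the signs of its rows and columns.) -/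
theorem strang_aux (n : ℕ) (σ τ : Equiv.Perm (Fin n)) (hτ : StrangCanonical τ)
    (hrow : ∀ i : Fin n, ((σ i : ℤ) - (i : ℤ)).sign = ((τ i : ℤ) - (i : ℤ)).sign)
    (hcol : ∀ j : Fin n, ((σ⁻¹ j : ℤ) - (j : ℤ)).sign = ((τ⁻¹ j : ℤ) - (j : ℤ)).sign)
    (i : Fin n) (ih : ∀ k < i, σ k = τ k) : ¬ σ i < τ i := by
  intro hlt
  obtain ⟨k, hk⟩ := τ.surjective (σ i)
  have hc := hcol (σ i)
  have e1 : σ⁻¹ (σ i) = i := σ.symm_apply_apply i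
  have e2 : τ⁻¹ (σ i) = k := by rw [← hk]; exact τ.symm_apply_apply k
  rw [e1, e2] at hc
  have hki : i < k := by
    rcases lt_trichotomy k i with h | h | h
    · have h2 := ih k h
      rw [hk] at h2
      exact absurd (σ.injective h2) h.ne
    · subst h
      exact absurd hk hlt.ne'
    · exact h
  have hr := hrow i
  have hkt : τ k < τ i := hk ▸ hlt
  rcases lt_trichotomy (σ i) i with h | h | h
  · have h1 : ((σ i : ℤ) - (i : ℤ)).sign = -1 := Int.sign_eq_neg_one_of_neg (by omega)
    have h2 : ((i : ℤ) - (σ i : ℤ)).sign = 1 := Int.sign_eq_one_of_pos (by omega)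
    rw [h1] at hr
    rw [h2] at hc
    have h3 := Int.sign_eq_neg_one_iff_neg.1 hr.symm
    have h4 := Int.sign_eq_one_iff_pos.1 hc.symm
    exact absurd (hτ.2 i k hki (by omega) (by rw [hk]; omega)) hkt.not_gt
  · rw [h, sub_self, Int.sign_zero] at hr
    have h3 := Int.sign_eq_zero_iff_zero.1 hr.symm
    omega
  · have h1 : ((σ i : ℤ) - (i : ℤ)).sign = 1 := Int.sign_eq_one_of_pos (by omega)
    have h2 : ((i : ℤ) - (σ i : ℤ)).sign = -1 := Int.sign_eq_neg_one_of_neg (by omega)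
    rw [h1] at hr
    rw [h2] at hc
    have h3 := Int.sign_eq_one_iff_pos.1 hr.symm
    have h4 := Int.sign_eq_neg_one_iff_neg.1 hc.symm
    exact absurd (hτ.1 i k hki (by omega) (by rw [hk]; omega)) hkt.not_gt

/-- A Strang canonical permutation is uniquely determined by the signs of
its rows (`σ(i) - i`) and its columns (`σ⁻¹(j) - j`). -/
theorem stmt_15 (n : ℕ) (σ τ : Equiv.Perm (Fin n))
    (hσ : StrangCanonical σ) (hτ : StrangCanonical τ)
    (hrow : ∀ i : Fin n, ((σ i : ℤ) - (i : ℤ)).sign = ((τ i : ℤ) - (i : ℤ)).sign)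
    (hcol : ∀ j : Fin n, ((σ⁻¹ j : ℤ) - (j : ℤ)).sign = ((τ⁻¹ j : ℤ) - (j : ℤ)).sign) :
    σ = τ := by
  have key : ∀ i, σ i = τ i := by
    intro i
    induction i using WellFoundedLT.induction with
    | ind i ih =>
      exact le_antisymm
        (not_lt.1 (strang_aux n τ σ hσ (fun i => (hrow i).symm) (fun i => (hcol i).symm) i
          (fun k hk => (ih k hk).symm)))
        (not_lt.1 (strang_aux n σ τ hτ hrow hcol i ih))
  exact Equiv.ext key
end

section
/- Let σ be a permutation of {1,…,n}, let t be a bubblesort step for σ, and set τ = σ ∘ t. Then Σ_i |τ(i) − i| ≤ Σ_i |σ(i) − i|, max_i |τ(i) − i| ≤ max_i |σ(i) − i|, and Σ_i (τ(i) − i)² < Σ_i (σ(i) − i)². (Under a parallel bubblesort iteration, the ℓ¹ and ℓ∞ norms of the displacement vector are nonincreasing and the ℓ² norm strictly decreases.) -/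
/-- Changing a sum at two adjacent positions by a swap. -/
theorem sum_swap_sub {n : ℕ} (σ : Equiv.Perm (Fin n)) (i j : Fin n) (hij : i ≠ j)
    (g : ℤ → ℤ) :
    ∑ k : Fin n, g (((σ * Equiv.swap i j) k : ℤ) - (k : ℤ)) - ∑ k : Fin n, g ((σ k : ℤ) - (k : ℤ))
      = (g ((σ j : ℤ) - (i : ℤ)) - g ((σ i : ℤ) - (i : ℤ)))
        + (g ((σ i : ℤ) - (j : ℤ)) - g ((σ j : ℤ) - (j : ℤ))) := by
  rw [← Finset.sum_sub_distrib, Fintype.sum_eq_add i j hij]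
  · simp
  · rintro x ⟨hi, hj⟩
    simp [Equiv.swap_apply_of_ne_of_ne hi hj]

theorem single_step {n : ℕ} (σ : Equiv.Perm (Fin n)) (i j : Fin n) (hij : (j : ℕ) = i + 1)
    (h : σ j < σ i) :
    (∑ k : Fin n, |((σ * Equiv.swap i j) k : ℤ) - (k : ℤ)| ≤ ∑ k : Fin n, |(σ k : ℤ) - (k : ℤ)|) ∧
    bandwidth (σ * Equiv.swap i j) ≤ bandwidth σ ∧
    (∑ k : Fin n, (((σ * Equiv.swap i j) k : ℤ) - (k : ℤ)) ^ 2
      < ∑ k : Fin n, ((σ k : ℤ) - (k : ℤ)) ^ 2) := by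
  have hne : i ≠ j := by
    rintro rfl
    omega
  have hlt : (σ j : ℕ) < (σ i : ℕ) := h
  refine ⟨?_, ?_, ?_⟩
  · have := sum_swap_sub σ i j hne (fun x => |x|)
    rw [← sub_nonpos, this]
    grind
  · unfold bandwidth
    refine Finset.sup_le fun k _ => ?_
    have hb : ∀ m : Fin n, ((σ m : ℤ) - (m : ℤ)).natAbs ≤
        Finset.univ.sup fun i : Fin n => ((σ i : ℤ) - (i : ℤ)).natAbs := fun m =>
      Finset.le_sup (f := fun i : Fin n => ((σ i : ℤ) - (i : ℤ)).natAbs) (Finset.mem_univ m)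
    have h1 := hb i
    have h2 := hb j
    by_cases hki : k = i
    · subst hki
      simp only [Equiv.Perm.mul_apply, Equiv.swap_apply_left]
      omega
    · by_cases hkj : k = j
      · subst hkj
        simp only [Equiv.Perm.mul_apply, Equiv.swap_apply_right]
        omega
      · simp only [Equiv.Perm.mul_apply, Equiv.swap_apply_of_ne_of_ne hki hkj]
        exact hb k
  · have := sum_swap_sub σ i j hne (fun x => x ^ 2)
    rw [← sub_neg, this]
    have hj : (j : ℤ) = i + 1 := by exact_mod_cast hij
    have hl : (σ j : ℤ) < σ i := by exact_mod_cast hlt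
    rw [hj]
    nlinarith

theorem list_step {n : ℕ} (l : List (Fin n)) : ∀ (σ : Equiv.Perm (Fin n)),
    l.Pairwise (fun i j : Fin n => (i : ℕ) + 2 ≤ (j : ℕ)) →
    (∀ i ∈ l, ∃ h : (i : ℕ) + 1 < n, σ ⟨(i : ℕ) + 1, h⟩ < σ i) →
    ∀ t : Equiv.Perm (Fin n), t = (l.map fun i : Fin n =>
      (if h : (i : ℕ) + 1 < n then Equiv.swap i ⟨(i : ℕ) + 1, h⟩
       else 1 : Equiv.Perm (Fin n))).prod →
    (∑ i : Fin n, |((σ * t) i : ℤ) - (i : ℤ)| ≤ ∑ i : Fin n, |(σ i : ℤ) - (i : ℤ)|) ∧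
    bandwidth (σ * t) ≤ bandwidth σ ∧
    (∑ i : Fin n, (((σ * t) i : ℤ) - (i : ℤ)) ^ 2 ≤ ∑ i : Fin n, ((σ i : ℤ) - (i : ℤ)) ^ 2) ∧
    (l ≠ [] → ∑ i : Fin n, (((σ * t) i : ℤ) - (i : ℤ)) ^ 2
      < ∑ i : Fin n, ((σ i : ℤ) - (i : ℤ)) ^ 2) := by
  induction l with
  | nil =>
    intro σ _ _ t ht
    subst ht
    simp
  | cons a l ih =>
    intro σ hp hd t ht
    rw [List.pairwise_cons] at hp
    obtain ⟨ha, hda⟩ := hd a (by simp)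
    obtain ⟨s1, s2, s3⟩ := single_step σ a ⟨(a : ℕ) + 1, ha⟩ rfl hda
    rw [List.map_cons, List.prod_cons, dif_pos ha] at ht
    obtain ⟨r1, r2, r3, -⟩ := ih (σ * Equiv.swap a ⟨(a : ℕ) + 1, ha⟩) hp.2 (by
      intro i hi
      obtain ⟨h, hlt⟩ := hd i (by simp [hi])
      have hai := hp.1 i hi
      refine ⟨h, ?_⟩
      rw [Equiv.Perm.mul_apply, Equiv.Perm.mul_apply,
        Equiv.swap_apply_of_ne_of_ne, Equiv.swap_apply_of_ne_of_ne]
      · exact hlt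
      all_goals
        rw [Ne, Fin.ext_iff]
        try simp only
        omega) _ rfl
    rw [mul_assoc, ← ht] at r1 r2 r3
    exact ⟨r1.trans s1, r2.trans s2, r3.trans s3.le, fun _ => r3.trans_lt s3⟩

/-- Under a bubblesort step, the ℓ¹ and ℓ∞ norms of the displacement vector
do not increase, and the ℓ² norm strictly decreases. -/
theorem stmt_17 (n : ℕ) (σ t : Equiv.Perm (Fin n)) (ht : IsBubbleStep σ t) :
    (∑ i : Fin n, |((σ * t) i : ℤ) - (i : ℤ)| ≤ ∑ i : Fin n, |(σ i : ℤ) - (i : ℤ)|) ∧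
    bandwidth (σ * t) ≤ bandwidth σ ∧
    (∑ i : Fin n, (((σ * t) i : ℤ) - (i : ℤ)) ^ 2 < ∑ i : Fin n, ((σ i : ℤ) - (i : ℤ)) ^ 2) := by
  obtain ⟨h1, l, hp, hd, ht⟩ := ht
  have hp' : l.Pairwise (fun i j : Fin n => (i : ℕ) + 2 ≤ (j : ℕ)) := by
    simpa [List.pairwise_map, ← List.map_eq_flatMap] using hp
  obtain ⟨r1, r2, -, r4⟩ := list_step l σ hp' hd t ht
  refine ⟨r1, r2, r4 ?_⟩
  rintro rfl
  exact h1 (by simpa using ht)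
end
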